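/- Let n > 1 and let y = (y₁,…,yₙ) be a vector of strictly positive integers whose greatest common divisor equals 1. Then there exists an n×n matrix Y with nonnegative integer entries and determinant equal to 1 such that one of the columns of Y is equal to y. -/

import Mathlib

/-!
Run the subtractive Euclidean algorithm on the entries of `y`: as long as two entries are positive,
subtract the smaller from the larger. It ends at a vector `g • e_c` with a single entry `g ≥ 0`.
Undoing a subtraction multiplies by a transvection `1 + E_ij`, which is nonnegative of
determinant `1`, so `y` is `g` times column `c` of a product of such matrices, and `gcd y = 1`
forces `g = 1`.
-/

open Matrix

/-- The monoid of entrywise nonnegative matrices of determinant `1`, in which the steps of the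
Euclidean algorithm are composed. The inverse of such a matrix may have negative entries, so this is
not a subgroup of the special linear group. -/
def nonnegUnimodular (ι R : Type*) [Fintype ι] [DecidableEq ι] [CommRing R] [PartialOrder R]
    [IsOrderedRing R] : Submonoid (Matrix ι ι R) where
  carrier := {Y | (∀ i j, 0 ≤ Y i j) ∧ Y.det = 1}
  one_mem' := ⟨fun i j ↦ by rw [one_apply]; split_ifs <;> simp, det_one⟩
  mul_mem' {Y Z} hY hZ :=
    ⟨fun i j ↦ Finset.sum_nonneg fun k _ ↦ mul_nonneg (hY.1 i k) (hZ.1 k j),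
      by rw [det_mul, hY.2, hZ.2, one_mul]⟩

section

variable {ι R : Type*} [DecidableEq ι]

theorem transvection_mem_nonnegUnimodular [Fintype ι] [CommRing R] [PartialOrder R]
    [IsOrderedRing R] {i j : ι} (hij : i ≠ j) {c : R} (hc : 0 ≤ c) :
    transvection i j c ∈ nonnegUnimodular ι R := by
  refine ⟨fun a b ↦ add_nonneg ((nonnegUnimodular ι R).one_mem.1 a b) ?_,
    det_transvection_of_ne i j hij c⟩
  rw [single_apply]
  split_ifs <;> simp [hc]

theorem transvection_mulVec [Fintype ι] [CommRing R] (i j : ι) (c : R) (y : ι → R) :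
    transvection i j c *ᵥ y = y + Pi.single i (c * y j) := by
  rw [transvection, add_mulVec, one_mulVec, single_mulVec, Pi.single]

theorem exists_eq_single_of_support_subsingleton [Nonempty ι] [Zero R] {y : ι → R}
    (hy : y.support.Subsingleton) : ∃ c, y = Pi.single c (y c) := by
  rcases hy.eq_empty_or_singleton with hempty | ⟨c, hc⟩
  · obtain rfl := Function.support_eq_empty_iff.mp hempty
    exact ⟨Classical.arbitrary ι, by simp⟩
  · refine ⟨c, funext fun i ↦ ?_⟩
    rcases eq_or_ne i c with rfl | hi
    · rw [Pi.single_eq_same]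
    · rw [Pi.single_eq_of_ne hi]
      exact Function.support_subset_iff'.mp hc.subset i hi

@[elab_as_elim]
theorem subtractive_euclid_induction [Fintype ι] [Nonempty ι] {P : (ι → ℤ) → Prop}
    (hsingle : ∀ c g, 0 ≤ g → P (Pi.single c g))
    (htransvection : ∀ i j y, i ≠ j → 0 ≤ y → P y → P (transvection i j 1 *ᵥ y))
    (y : ι → ℤ) (hy : 0 ≤ y) : P y := by
  induction hN : (∑ k, y k).toNat using Nat.strong_induction_on generalizing y with
  | _ N ih =>
  rcases y.support.subsingleton_or_nontrivial with hsupp | ⟨i, hi, j, hj, hij⟩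
  · obtain ⟨c, hc⟩ := exists_eq_single_of_support_subsingleton hsupp
    exact hc ▸ hsingle c (y c) (hy c)
  · wlog hle : y j ≤ y i generalizing i j
    · exact this j hj i hi hij.symm (le_of_not_ge hle)
    have hj_pos : 0 < y j := lt_of_le_of_ne (hy j) hj.symm
    let z := y - Pi.single i (y j)
    have hzj : z j = y j := by simp [z, hij.symm]
    have hz : 0 ≤ z := by
      intro k
      rcases eq_or_ne k i with rfl | hk
      · simpa [z] using hle
      · simpa [z, hk] using hy k
    have hsum : ∑ k, z k = ∑ k, y k - y j := by simp [z]
    have hsum_nonneg : 0 ≤ ∑ k, z k := Finset.sum_nonneg fun k _ ↦ hz k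
    have hyz : transvection i j 1 *ᵥ z = y := by
      rw [transvection_mulVec, one_mul, hzj, sub_add_cancel]
    exact hyz ▸ htransvection i j z hij hz (ih _ (by lia) z hz rfl)

theorem exists_nonnegUnimodular_mulVec_single_eq [Fintype ι] [Nonempty ι] {y : ι → ℤ}
    (hy : 0 ≤ y) :
    ∃ Y ∈ nonnegUnimodular ι ℤ, ∃ c g, 0 ≤ g ∧ Y *ᵥ Pi.single c g = y := by
  refine subtractive_euclid_induction (fun c g hg ↦ ?_) (fun i j z hij _ ih ↦ ?_) y hy
  · exact ⟨1, one_mem _, c, g, hg, one_mulVec _⟩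
  · obtain ⟨Y, hY, c, g, hg, rfl⟩ := ih
    exact ⟨transvection i j 1 * Y,
      mul_mem (transvection_mem_nonnegUnimodular hij zero_le_one) hY, c, g, hg,
      (mulVec_mulVec _ _ _).symm⟩

end

theorem completion_to_unimodular_nonneg_matrix_general
    {ι : Type*} [Fintype ι] [DecidableEq ι] (y : ι → ℤ)
    (hy : ∀ i, 0 ≤ y i) (hgcd : Finset.univ.gcd y = 1) :
    ∃ Y : Matrix ι ι ℤ,
      (∀ i j, 0 ≤ Y i j) ∧ Y.det = 1 ∧ ∃ c : ι, ∀ i, Y i c = y i := by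
  have : Nonempty ι := by
    by_contra hempty
    rw [not_nonempty_iff] at hempty
    simp at hgcd
  obtain ⟨Y, hY, c, g, hg, rfl⟩ := exists_nonnegUnimodular_mulVec_single_eq hy
  have hcol (i : ι) : (Y *ᵥ Pi.single c g) i = Y i c * g := by simp
  have hg_one : g = 1 := by
    refine Int.eq_one_of_dvd_one hg (hgcd ▸ Finset.dvd_gcd fun i _ ↦ ?_)
    exact hcol i ▸ dvd_mul_left g (Y i c)
  exact ⟨Y, hY.1, hY.2, c, fun i ↦ by rw [hcol, hg_one, mul_one]⟩

theorem completion_to_unimodular_nonneg_matrix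
    (n : ℕ) (hn : 1 < n) (y : Fin n → ℤ)
    (hy : ∀ i, 0 < y i) (hgcd : Finset.univ.gcd y = 1) :
    ∃ Y : Matrix (Fin n) (Fin n) ℤ,
      (∀ i j, 0 ≤ Y i j) ∧ Y.det = 1 ∧ ∃ c : Fin n, ∀ i, Y i c = y i :=
  completion_to_unimodular_nonneg_matrix_general y (fun i ↦ (hy i).le) hgcd
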